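/- arXiv:2003.08894 — 2 statements merged into one kernel-verified Lean document; each statement's English description precedes it below -/
import Mathlib

section
/- Let G be a finitely generated group with finite generating set S, let H be a geodesic space with Δ-thin triangles, and let ρ_n : G → Isom(H) be a sequence of homomorphisms that blows up. Let K be the complete graph with vertex set G, let x_n be an approximate center of ρ_n, let ι_n : K → H be the ρ_n-equivariant straight map with ι_n(g) = ρ_n(g)x_n on vertices, let d_n = ι_n*d_H, and let λ_n = (max{1, d_n(1_G, s) : s ∈ S})^{-1}. Then there is a subsequence such that the rescaled pseudo-metrics λ_n d_n converge pointwise on K × K to a pseudo-metric d̄, and the metric space associated to (K, d̄) is an ℝ-tree. -/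
open Set Filter Metric

section Common

variable {H : Type*} [MetricSpace H]

/-- `γ` parametrizes a geodesic from `a` to `b` by arclength on `[0, dist a b]`. -/
def IsGeodesicSegment (γ : ℝ → H) (a b : H) : Prop :=
  γ 0 = a ∧ γ (dist a b) = b ∧
    ∀ s ∈ Set.Icc (0:ℝ) (dist a b), ∀ t ∈ Set.Icc (0:ℝ) (dist a b),
      dist (γ s) (γ t) = |s - t|

/-- A geodesic space: every pair of points is joined by a geodesic. -/
def GeodesicSpace (H : Type*) [MetricSpace H] : Prop :=
  ∀ a b : H, ∃ γ : ℝ → H, IsGeodesicSegment γ a b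

/-- The image of a geodesic segment from `a` to `b`. -/
def segImage (γ : ℝ → H) (a b : H) : Set H :=
  γ '' Set.Icc 0 (dist a b)

/-- A space has `Δ`-thin triangles if each side of every geodesic triangle is contained
in the `Δ`-neighborhood of the union of the other two sides. -/
def ThinTriangles (H : Type*) [MetricSpace H] (Δ : ℝ) : Prop :=
  ∀ a b c : H, ∀ γab γbc γca : ℝ → H,
    IsGeodesicSegment γab a b → IsGeodesicSegment γbc b c → IsGeodesicSegment γca c a →
      ∀ x ∈ segImage γab a b, ∃ y ∈ segImage γbc b c ∪ segImage γca c a, dist x y ≤ Δ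

/-- An arc from `a` to `b`, parametrized (injectively and continuously) by `[0,1]`. -/
def IsArcParam (α : ℝ → H) (a b : H) : Prop :=
  ContinuousOn α (Set.Icc 0 1) ∧ Set.InjOn α (Set.Icc 0 1) ∧ α 0 = a ∧ α 1 = b

/-- An `ℝ`-tree: a metric space in which every pair of points is joined by a geodesic
(so it is a path-metric space and arcs are isometric to intervals of `ℝ`) and in which
the arc joining two points is unique. -/
def IsRTree (X : Type*) [MetricSpace X] : Prop :=
  (∀ a b : X, ∃ γ : ℝ → X, IsGeodesicSegment γ a b) ∧
  ∀ a b : X, ∀ α β : ℝ → X, IsArcParam α a b → IsArcParam β a b →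
    α '' Set.Icc 0 1 = β '' Set.Icc 0 1

/-- The translation length of an isometry. -/
noncomputable def translationLength {X : Type*} [MetricSpace X] (τ : X ≃ᵢ X) : ℝ :=
  ⨅ x : X, dist x (τ x)

/-- The core of an isometry of an `ℝ`-tree: points moved the minimal distance. -/
def isomCore {X : Type*} [MetricSpace X] (τ : X ≃ᵢ X) : Set X :=
  {x : X | dist x (τ x) = translationLength τ}

/-- An elliptic isometry: one having a fixed point. -/
def IsElliptic {X : Type*} [MetricSpace X] (τ : X ≃ᵢ X) : Prop :=
  ∃ x, τ x = x

/-- A hyperbolic isometry of an `ℝ`-tree: positive translation length, with core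
isometric to the real line (its axis). -/
def IsHyperbolicIsom {X : Type*} [MetricSpace X] (τ : X ≃ᵢ X) : Prop :=
  0 < translationLength τ ∧
    ∃ e : ℝ → X, (∀ s t : ℝ, dist (e s) (e t) = |s - t|) ∧ Set.range e = isomCore τ

/-- A metric simplicial tree: an `ℝ`-tree together with a closed discrete set `V` of
vertices such that each connected component of the complement of `V` is an open edge:
it is the interior of a geodesic segment of positive length with endpoints in `V`. -/
def IsMetricSimplicialTree (X : Type*) [MetricSpace X] : Prop :=
  IsRTree X ∧
    ∃ V : Set X, IsClosed V ∧
      (∀ v ∈ V, ∃ ε > 0, ∀ w ∈ V, dist v w < ε → w = v) ∧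
      ∀ x ∈ Vᶜ, ∃ L > (0:ℝ), ∃ f : ℝ → X,
        (∀ s ∈ Set.Icc (0:ℝ) L, ∀ t ∈ Set.Icc (0:ℝ) L, dist (f s) (f t) = |s - t|) ∧
        f '' Set.Ioo 0 L = connectedComponentIn Vᶜ x ∧ f 0 ∈ V ∧ f L ∈ V

end Common

open scoped Classical

section CompleteGraph

/-- The convex combination `(1-t)·δ_u + t·δ_v` of two Dirac functions on `G`. -/
noncomputable def deltaComb {G : Type*} (u v : G) (t : ℝ) : G → ℝ :=
  fun x => (1 - t) * (if x = u then 1 else 0) + t * (if x = v then 1 else 0)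

/-- The geometric realization of the complete graph `K(G)` with vertex set `G`:
all convex combinations of two Dirac functions; `deltaComb u v t` is the point at
parameter `t` on the edge joining the vertices `u` and `v`. -/
def KG (G : Type*) : Type _ :=
  {f : G → ℝ // ∃ u v : G, ∃ t : ℝ, t ∈ Set.Icc (0:ℝ) 1 ∧ f = deltaComb u v t}

/-- The point at parameter `t ∈ [0,1]` on the edge of `K(G)` joining `u` to `v`. -/
noncomputable def kpt {G : Type*} (u v : G) (t : ℝ) (ht : t ∈ Set.Icc (0:ℝ) 1) : KG G :=
  ⟨deltaComb u v t, u, v, t, ht, rfl⟩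

/-- The vertex of `K(G)` corresponding to `g : G`. -/
noncomputable def vtx {G : Type*} (g : G) : KG G :=
  kpt g g 0 ⟨le_refl _, zero_le_one⟩

/-- The action of `G` on `K(G)` by left multiplication on the vertices, extended
affinely over the edges. -/
noncomputable def leftMulKG {G : Type*} [Group G] (g : G) (p : KG G) : KG G :=
  ⟨fun x => p.1 (g⁻¹ * x), by
    obtain ⟨u, v, t, ht, hf⟩ := p.2
    refine ⟨g * u, g * v, t, ht, ?_⟩
    funext x
    rw [hf]
    simp [deltaComb, inv_mul_eq_iff_eq_mul]⟩

/-- A map `ι : K(G) → H` is straight if it is linear on each edge of `K(G)`. -/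
def StraightOnKG {G H : Type*} [MetricSpace H] (ι : KG G → H) : Prop :=
  ∀ u v : G, ∀ t : ℝ, ∀ ht : t ∈ Set.Icc (0:ℝ) 1,
    dist (ι (kpt u v 0 ⟨le_refl _, zero_le_one⟩)) (ι (kpt u v t ht))
      = t * dist (ι (kpt u v 0 ⟨le_refl _, zero_le_one⟩))
          (ι (kpt u v 1 ⟨zero_le_one, le_refl _⟩))

/-- `r_S(x) = max {d(x, ρ(α)x) : α ∈ S}`. -/
noncomputable def rS {G H : Type*} [MetricSpace H] (S : Finset G) (hS : S.Nonempty)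
    (ρ : G → (H ≃ᵢ H)) (x : H) : ℝ :=
  S.sup' hS (fun α => dist x (ρ α x))

/-- The rescaling factor `λ = (max {1, d(ι(1_G), ι(s)) : s ∈ S})⁻¹`. -/
noncomputable def rescaleFactor {G H : Type*} [Group G] [MetricSpace H]
    (S : Finset G) (hS : S.Nonempty) (ι : KG G → H) : ℝ :=
  (max 1 (S.sup' hS fun s => dist (ι (vtx (1 : G))) (ι (vtx s))))⁻¹

end CompleteGraph

section Helpers

/-- Four point condition with constant `δ`. -/
def FourPt (X : Type*) [MetricSpace X] (δ : ℝ) : Prop :=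
  ∀ p q r s : X, dist p q + dist r s ≤
    max (dist p r + dist q s) (dist p s + dist q r) + δ

/-- Every intermediate position between `a` and `c` is realized. -/
def FullBtw {X : Type*} [MetricSpace X] (a c : X) : Prop :=
  ∀ t ∈ Set.Icc (0:ℝ) (dist a c), ∃ m, dist a m = t ∧ dist m c = dist a c - t

theorem seg_btw {H : Type*} [MetricSpace H] {γ : ℝ → H} {a b : H}
    (h : IsGeodesicSegment γ a b) {z : H} (hz : z ∈ segImage γ a b) :
    dist a z + dist z b = dist a b := by
  obtain ⟨t, ht, rfl⟩ := hz
  obtain ⟨h0, h1, h2⟩ := h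
  have e1 := h2 0 ⟨le_rfl, dist_nonneg⟩ t ht
  have e2 := h2 t ht (dist a b) ⟨dist_nonneg, le_rfl⟩
  rw [h0] at e1
  rw [h1] at e2
  rw [e1, e2, abs_of_nonpos (by linarith [ht.1]), abs_of_nonpos (by linarith [ht.2])]
  ring

theorem near_center {H : Type*} [MetricSpace H] {Δ : ℝ} (hΔ : 0 < Δ)
    (hgeo : GeodesicSpace H) (hthin : ThinTriangles H Δ) (a b c : H) (γ : ℝ → H)
    (hγ : IsGeodesicSegment γ b c) :
    ∃ y ∈ segImage γ b c, 2 * dist a y ≤ dist a b + dist a c - dist b c + 8 * Δ := by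
  obtain ⟨γ1, h1⟩ := hgeo c a
  obtain ⟨γ2, h2⟩ := hgeo a b
  have ne1 : (segImage γ1 c a).Nonempty := ⟨γ1 0, 0, ⟨le_rfl, dist_nonneg⟩, rfl⟩
  have ne2 : (segImage γ2 a b).Nonempty := ⟨γ2 0, 0, ⟨le_rfl, dist_nonneg⟩, rfl⟩
  have hcont : ContinuousOn γ (Set.Icc 0 (dist b c)) := by
    rw [Metric.continuousOn_iff]
    intro s hs ε hε
    refine ⟨ε, hε, fun t ht htd => ?_⟩
    rw [hγ.2.2 t ht s hs]
    exact htd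
  have key : (Set.Icc 0 (dist b c) ∩
      ((Set.Icc 0 (dist b c) ∩ (fun s => infDist (γ s) (segImage γ1 c a)) ⁻¹' Set.Iic Δ) ∩
       (Set.Icc 0 (dist b c) ∩ (fun s => infDist (γ s) (segImage γ2 a b)) ⁻¹' Set.Iic Δ))).Nonempty := by
    apply isPreconnected_closed_iff.1 (isPreconnected_Icc (a := (0:ℝ)) (b := dist b c))
    · exact ContinuousOn.preimage_isClosed_of_isClosed
        ((continuous_infDist_pt _).comp_continuousOn hcont) isClosed_Icc isClosed_Iic
    · exact ContinuousOn.preimage_isClosed_of_isClosed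
        ((continuous_infDist_pt _).comp_continuousOn hcont) isClosed_Icc isClosed_Iic
    · intro s hs
      obtain ⟨y, hy, hd⟩ := hthin b c a γ γ1 γ2 hγ h1 h2 (γ s) ⟨s, hs, rfl⟩
      rcases hy with hy | hy
      · exact Or.inl ⟨hs, (infDist_le_dist_of_mem hy).trans hd⟩
      · exact Or.inr ⟨hs, (infDist_le_dist_of_mem hy).trans hd⟩
    · refine ⟨dist b c, ⟨dist_nonneg, le_rfl⟩, ⟨dist_nonneg, le_rfl⟩, ?_⟩
      have : c ∈ segImage γ1 c a := ⟨0, ⟨le_rfl, dist_nonneg⟩, h1.1⟩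
      show infDist _ _ ≤ Δ
      rw [hγ.2.1, infDist_zero_of_mem this]
      exact hΔ.le
    · refine ⟨0, ⟨le_rfl, dist_nonneg⟩, ⟨le_rfl, dist_nonneg⟩, ?_⟩
      have : b ∈ segImage γ2 a b := ⟨dist a b, ⟨dist_nonneg, le_rfl⟩, h2.2.1⟩
      show infDist _ _ ≤ Δ
      rw [hγ.1, infDist_zero_of_mem this]
      exact hΔ.le
  obtain ⟨s, hs, ⟨-, hs1⟩, ⟨-, hs2⟩⟩ := key
  have hs1' : infDist (γ s) (segImage γ1 c a) < 2 * Δ := lt_of_le_of_lt hs1 (by linarith)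
  have hs2' : infDist (γ s) (segImage γ2 a b) < 2 * Δ := lt_of_le_of_lt hs2 (by linarith)
  obtain ⟨u, hu, hud⟩ := (infDist_lt_iff ne1).1 hs1'
  obtain ⟨v, hv, hvd⟩ := (infDist_lt_iff ne2).1 hs2'
  refine ⟨γ s, ⟨s, hs, rfl⟩, ?_⟩
  have e0 := seg_btw hγ ⟨s, hs, rfl⟩
  have e1 := seg_btw h1 hu
  have e2 := seg_btw h2 hv
  have t1 := dist_triangle a u (γ s)
  have t2 := dist_triangle c u (γ s)
  have t3 := dist_triangle a v (γ s)
  have t4 := dist_triangle b v (γ s)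
  rw [dist_comm u (γ s)] at t1 t2
  rw [dist_comm v (γ s)] at t3 t4
  rw [dist_comm u a, dist_comm c a] at e1
  rw [dist_comm v b] at e2
  rw [dist_comm (γ s) c] at e0
  linarith

theorem fourPt_of_thin {H : Type*} [MetricSpace H] {Δ : ℝ} (hΔ : 0 < Δ)
    (hgeo : GeodesicSpace H) (hthin : ThinTriangles H Δ) : FourPt H (10 * Δ) := by
  intro a c b d
  obtain ⟨γ, hγ⟩ := hgeo b d
  obtain ⟨γ1, h1⟩ := hgeo d c
  obtain ⟨γ2, h2⟩ := hgeo c b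
  obtain ⟨y, hy, hay⟩ := near_center hΔ hgeo hthin a b d γ hγ
  obtain ⟨z, hz, hyz⟩ := hthin b d c γ γ1 γ2 hγ h1 h2 y hy
  have t0 := dist_triangle a y z
  rcases hz with hz | hz
  · have e := seg_btw h1 hz
    have t1 := dist_triangle a z d
    have t2 := dist_triangle a z c
    rw [dist_comm z d] at t1
    have := le_max_left (dist a b + dist c d) (dist a d + dist c b)
    rw [dist_comm d c] at e
    linarith
  · have e := seg_btw h2 hz
    have t1 := dist_triangle a z c
    have t2 := dist_triangle a z b
    rw [dist_comm z c] at t1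
    have := le_max_right (dist a b + dist c d) (dist a d + dist c b)
    linarith

section Tree

variable {X : Type*} [MetricSpace X]

theorem btw_dist (h4 : FourPt X 0) {a c m p : X} (hm : dist a m + dist m c = dist a c)
    (hp : dist a p + dist p c = dist a c) : dist m p = |dist a m - dist a p| := by
  have h := h4 m p a c
  rw [dist_comm m a, dist_comm p a] at h
  apply le_antisymm
  · rw [add_zero, le_max_iff] at h
    rcases h with h | h
    · exact le_trans (by linarith) (le_abs_self _)
    · exact le_trans (by linarith) (neg_le_abs _)
  · rw [dist_comm a m, dist_comm a p]
    exact abs_dist_sub_le m p a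

theorem FullBtw.symm {a c : X} (h : FullBtw a c) : FullBtw c a := by
  intro t ht
  rw [dist_comm c a] at ht ⊢
  obtain ⟨m, h1, h2⟩ := h (dist a c - t) ⟨by linarith [ht.2], by linarith [ht.1]⟩
  exact ⟨m, by rw [dist_comm, h2]; ring, by rw [dist_comm, h1]⟩

theorem median_aux (h4 : FourPt X 0) {a b c m : X} {t : ℝ} (h1 : dist a m = t)
    (h2 : dist m b = dist a b - t) (ht : 2 * t ≤ dist a b + dist a c - dist b c) :
    dist m c = dist a c - t := by
  have h := h4 m c a b
  have t1 := dist_triangle a m c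
  rw [dist_comm m a, dist_comm c b, dist_comm c a] at h
  rw [add_zero, le_max_iff] at h
  rcases h with h | h <;> linarith

theorem FullBtw.trans (h4 : FourPt X 0) {a b c : X} (h : FullBtw a b) (h' : FullBtw b c) :
    FullBtw a c := by
  intro t ht
  by_cases hc : 2 * t ≤ dist a b + dist a c - dist b c
  · have tr := dist_triangle a b c
    obtain ⟨m, h1, h2⟩ := h t ⟨ht.1, by linarith⟩
    exact ⟨m, h1, median_aux h4 h1 h2 hc⟩
  · push Not at hc
    have tr := dist_triangle a b c
    obtain ⟨m, h1, h2⟩ := h'.symm (dist a c - t)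
      ⟨by linarith [ht.2], by rw [dist_comm c b]; linarith⟩
    refine ⟨m, ?_, by rw [dist_comm, h1]⟩
    have := median_aux h4 (c := a) h1 h2
      (by rw [dist_comm c b, dist_comm c a, dist_comm b a]; linarith)
    rw [dist_comm, this, dist_comm c a]; ring

theorem FullBtw.sub (h4 : FourPt X 0) {a b p : X} (h : FullBtw a b)
    (hp : dist a p + dist p b = dist a b) : FullBtw a p := by
  intro t ht
  have := dist_nonneg (x := p) (y := b)
  obtain ⟨m, h1, h2⟩ := h t ⟨ht.1, by linarith [ht.2]⟩
  refine ⟨m, h1, ?_⟩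
  rw [btw_dist h4 (by linarith) hp, h1, abs_of_nonpos (by linarith [ht.2])]
  ring

theorem FullBtw.geodesic (h4 : FourPt X 0) {a b : X} (h : FullBtw a b) :
    ∃ γ : ℝ → X, IsGeodesicSegment γ a b := by
  have : ∀ t : ℝ, ∃ m, t ∈ Set.Icc (0:ℝ) (dist a b) → dist a m = t ∧ dist m b = dist a b - t := by
    intro t
    by_cases ht : t ∈ Set.Icc (0:ℝ) (dist a b)
    · obtain ⟨m, hm⟩ := h t ht
      exact ⟨m, fun _ => hm⟩
    · exact ⟨a, fun h => absurd h ht⟩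
  choose γ hγ using this
  refine ⟨γ, ?_, ?_, ?_⟩
  · exact (dist_eq_zero.1 (hγ 0 ⟨le_rfl, dist_nonneg⟩).1).symm
  · exact dist_eq_zero.1 (by rw [(hγ (dist a b) ⟨dist_nonneg, le_rfl⟩).2]; ring)
  · intro s hs t ht
    obtain ⟨s1, s2⟩ := hγ s hs
    obtain ⟨t1, t2⟩ := hγ t ht
    rw [btw_dist h4 (a := a) (c := b) (by linarith) (by linarith), s1, t1]

theorem path_contains (h4 : FourPt X 0) {A : Set X} (hA : IsPreconnected A) {a b m : X}
    (ha : a ∈ A) (hb : b ∈ A) (hm : dist a m + dist m b = dist a b) : m ∈ A := by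
  by_contra hmA
  have hcont : Continuous fun x : X => dist a x - dist x b := by fun_prop
  have hcont2 : Continuous fun x : X => dist a x + dist x b := by fun_prop
  have hma : a ≠ m := fun h => hmA (h ▸ ha)
  have hma' := dist_pos.2 hma
  let U : Set X := {x | dist a x - dist x b < dist a m - dist m b}
  let V : Set X := {x | dist a m - dist m b ≤ dist a x - dist x b ∧ x ≠ m}
  have hU : IsOpen U := isOpen_lt hcont continuous_const
  have hV : IsOpen V := by
    rw [Metric.isOpen_iff]
    rintro x ⟨hx, hxm⟩
    rcases hx.lt_or_eq with hlt | heq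
    · have ho : IsOpen {x | dist a m - dist m b < dist a x - dist x b} :=
        isOpen_lt continuous_const hcont
      obtain ⟨ε, hε, hs⟩ := Metric.isOpen_iff.1 ho x hlt
      refine ⟨ε, hε, fun y hy => ⟨(hs hy).le, ?_⟩⟩
      rintro rfl
      have hlt2 : dist a y - dist y b < dist a y - dist y b := hs hy
      exact lt_irrefl _ hlt2
    · have hpos : 0 < dist a x + dist x b - dist a b := by
        rcases (dist_triangle a x b).lt_or_eq with h | h
        · linarith
        · exfalso
          apply hxm
          have := btw_dist h4 h.symm hm
          rw [show dist a x - dist a m = 0 by linarith, abs_zero] at this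
          exact dist_eq_zero.1 this
      have hxm' := dist_pos.2 hxm
      refine ⟨min ((dist a x + dist x b - dist a b) / 2) (dist x m),
        lt_min (by linarith) hxm', fun y hy => ?_⟩
      rw [mem_ball, lt_min_iff] at hy
      refine ⟨?_, ?_⟩
      · rw [heq]
        have h := h4 a x y b
        have t1 := dist_triangle x y b
        rw [add_zero, le_max_iff, dist_comm x y] at h
        rw [dist_comm x y] at t1
        rcases h with h | h <;> linarith [hy.1]
      · rintro rfl
        rw [dist_comm] at hy
        exact lt_irrefl _ hy.2
  obtain ⟨z, -, hzU, hzV⟩ := hA U V hU hV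
    (fun x hx => by
      by_cases h : dist a x - dist x b < dist a m - dist m b
      · exact Or.inl h
      · exact Or.inr ⟨not_lt.1 h, fun h' => hmA (h' ▸ hx)⟩)
    ⟨a, ha, by
      show dist a a - dist a b < dist a m - dist m b
      rw [dist_self]; linarith⟩
    ⟨b, hb, by
      rw [dist_self]
      linarith [dist_nonneg (x := m) (y := b)], fun h' => hmA (h' ▸ hb)⟩
  exact absurd hzU (not_lt.2 hzV.1)

theorem arc_eq (h4 : FourPt X 0) (hfull : ∀ a b : X, FullBtw a b) {a b : X} {α : ℝ → X}
    (hα : IsArcParam α a b) :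
    α '' Set.Icc 0 1 = {m | dist a m + dist m b = dist a b} := by
  obtain ⟨hc, hi, h0, h1⟩ := hα
  apply Set.Subset.antisymm
  · rintro x ⟨s, hs, rfl⟩
    have t1 := dist_triangle a b (α s)
    have t2 := dist_triangle a (α s) b
    have t3 := dist_triangle (α s) a b
    rw [dist_comm b (α s)] at t1
    rw [dist_comm (α s) a] at t3
    obtain ⟨m, hm1, hm2⟩ := hfull a (α s) ((dist a (α s) + dist a b - dist (α s) b) / 2)
      ⟨by linarith, by linarith⟩
    have hm3 := median_aux h4 (c := b) hm1 hm2 (by linarith)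
    have m1 : m ∈ α '' Set.Icc 0 s := by
      refine path_contains h4 (isPreconnected_Icc.image _
        (hc.mono (Set.Icc_subset_Icc_right hs.2))) (a := a) (b := α s) ?_ ?_ (by linarith)
      · exact ⟨0, ⟨le_rfl, hs.1⟩, h0⟩
      · exact ⟨s, ⟨hs.1, le_rfl⟩, rfl⟩
    have m2 : m ∈ α '' Set.Icc s 1 := by
      refine path_contains h4 (isPreconnected_Icc.image _
        (hc.mono (Set.Icc_subset_Icc_left hs.1))) (a := α s) (b := b) ?_ ?_
        (by rw [dist_comm (α s) m]; linarith)
      · exact ⟨s, ⟨le_rfl, hs.2⟩, rfl⟩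
      · exact ⟨1, ⟨hs.2, le_rfl⟩, h1⟩
    obtain ⟨p, hp, hpm⟩ := m1
    obtain ⟨q, hq, hqm⟩ := m2
    have hpq : p = q := hi ⟨hp.1, hp.2.trans hs.2⟩ ⟨hs.1.trans hq.1, hq.2⟩ (hpm.trans hqm.symm)
    have hps : p = s := le_antisymm hp.2 (hpq ▸ hq.1)
    rw [hps] at hpm
    rw [← hpm] at hm1 hm2
    rw [dist_self] at hm2
    show dist a (α s) + dist (α s) b = dist a b
    linarith
  · intro m hm
    exact path_contains h4 (isPreconnected_Icc.image _ hc)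
      ⟨0, ⟨le_rfl, zero_le_one⟩, h0⟩ ⟨1, ⟨zero_le_one, le_rfl⟩, h1⟩ hm

theorem rtree_of_full (h4 : FourPt X 0) (hfull : ∀ a b : X, FullBtw a b) : IsRTree X :=
  ⟨fun a b => (hfull a b).geodesic h4, fun a b α β hα hβ => by
    rw [arc_eq h4 hfull hα, arc_eq h4 hfull hβ]⟩

end Tree

theorem conv_of_approx (a : ℕ → ℝ)
    (h : ∀ ε > 0, ∃ b : ℕ → ℝ, ∃ l, Tendsto b atTop (nhds l) ∧ ∀ᶠ n in atTop, |a n - b n| ≤ ε) :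
    ∃ l, Tendsto a atTop (nhds l) := by
  apply cauchySeq_tendsto_of_complete
  rw [Metric.cauchySeq_iff']
  intro ε hε
  obtain ⟨b, l, hb, hab⟩ := h (ε / 5) (by linarith)
  have h1 := Metric.tendsto_nhds.1 hb (ε / 5) (by linarith)
  obtain ⟨N, hN⟩ := eventually_atTop.1 (hab.and h1)
  refine ⟨N, fun n hn => ?_⟩
  obtain ⟨p1, p2⟩ := hN n hn
  obtain ⟨q1, q2⟩ := hN N le_rfl
  rw [Real.dist_eq] at *
  rw [abs_le] at p1 q1
  rw [abs_lt] at *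
  constructor <;> linarith

theorem subseq_conv {X I : Type*} [Countable I] (D : ℕ → X → X → ℝ) (pt : I → X)
    (hnn : ∀ n p q, 0 ≤ D n p q) (hsymm : ∀ n p q, D n p q = D n q p)
    (htri : ∀ n p q r, D n p r ≤ D n p q + D n q r)
    (hbd : ∀ p q, ∃ C, ∀ n, D n p q ≤ C)
    (happ : ∀ p, ∀ ε > 0, ∃ i, ∀ᶠ n in atTop, D n p (pt i) ≤ ε) :
    ∃ φ : ℕ → ℕ, StrictMono φ ∧ ∃ dbar : X → X → ℝ,
      ∀ p q, Tendsto (fun i => D (φ i) p q) atTop (nhds (dbar p q)) := by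
  choose C hC using hbd
  have hcomp : IsCompact (Set.univ.pi fun k : I × I => Set.Icc (0:ℝ) (C (pt k.1) (pt k.2))) :=
    isCompact_univ_pi fun _ => isCompact_Icc
  obtain ⟨l, -, φ, hφ, hl⟩ := hcomp.tendsto_subseq
    (x := fun n (k : I × I) => D n (pt k.1) (pt k.2))
    (fun n k _ => ⟨hnn _ _ _, hC _ _ _⟩)
  rw [tendsto_pi_nhds] at hl
  have : ∀ p q, ∃ L, Tendsto (fun i => D (φ i) p q) atTop (nhds L) := by
    intro p q
    apply conv_of_approx
    intro ε hε
    obtain ⟨i, hi⟩ := happ p (ε / 2) (by linarith)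
    obtain ⟨j, hj⟩ := happ q (ε / 2) (by linarith)
    refine ⟨_, _, hl (i, j), ?_⟩
    filter_upwards [hφ.tendsto_atTop.eventually hi, hφ.tendsto_atTop.eventually hj] with n h1 h2
    show |D (φ n) p q - D (φ n) (pt i) (pt j)| ≤ ε
    have t1 := htri (φ n) p (pt i) q
    have t2 := htri (φ n) (pt i) (pt j) q
    have t3 := htri (φ n) (pt i) p (pt j)
    have t4 := htri (φ n) p q (pt j)
    rw [hsymm _ (pt j) q] at t2
    rw [hsymm _ (pt i) p] at t3
    rw [abs_le]
    constructor <;> linarith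
  choose dbar hd using this
  exact ⟨φ, hφ, dbar, hd⟩

theorem metric_quot {X : Type u} (d : X → X → ℝ) (h0 : ∀ p, d p p = 0)
    (hs : ∀ p q, d p q = d q p) (ht : ∀ p q r, d p r ≤ d p q + d q r) :
    ∃ (T : Type u) (_ : MetricSpace T) (qm : X → T),
      Function.Surjective qm ∧ ∀ p q, dist (qm p) (qm q) = d p q := by
  let _ : PseudoMetricSpace X :=
    { dist := d
      dist_self := h0
      dist_comm := hs
      dist_triangle := ht }
  exact ⟨SeparationQuotient X, inferInstance, SeparationQuotient.mk,
    SeparationQuotient.surjective_mk, fun p q => SeparationQuotient.dist_mk p q⟩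

theorem kpt_zero {G : Type*} (u v : G) (h : (0:ℝ) ∈ Set.Icc (0:ℝ) 1) : kpt u v 0 h = vtx u := by
  apply Subtype.ext
  funext x
  simp [kpt, vtx, deltaComb]

theorem kpt_one {G : Type*} (u v : G) (h : (1:ℝ) ∈ Set.Icc (0:ℝ) 1) : kpt u v 1 h = vtx v := by
  apply Subtype.ext
  funext x
  simp [kpt, vtx, deltaComb]

theorem kpt_symm {G : Type*} (u v : G) (t : ℝ) (h : t ∈ Set.Icc (0:ℝ) 1)
    (h' : 1 - t ∈ Set.Icc (0:ℝ) 1) : kpt u v t h = kpt v u (1 - t) h' := by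
  apply Subtype.ext
  funext x
  simp only [kpt, deltaComb]
  ring

theorem exists_kpt {G : Type*} (p : KG G) : ∃ u v t, ∃ ht, p = kpt u v t ht := by
  obtain ⟨f, u, v, t, ht, hf⟩ := p
  exact ⟨u, v, t, ht, Subtype.ext hf⟩

theorem straight_left {G H : Type*} [MetricSpace H] {ι : KG G → H} (h : StraightOnKG ι)
    (u v : G) (t : ℝ) (ht : t ∈ Set.Icc (0:ℝ) 1) :
    dist (ι (vtx u)) (ι (kpt u v t ht)) = t * dist (ι (vtx u)) (ι (vtx v)) := by
  have := h u v t ht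
  have e0 : kpt u v 0 ⟨le_refl _, zero_le_one⟩ = vtx u := kpt_zero u v _
  have e1 : kpt u v 1 ⟨zero_le_one, le_refl _⟩ = vtx v := kpt_one u v _
  rwa [e0, e1] at this

theorem straight_right {G H : Type*} [MetricSpace H] {ι : KG G → H} (h : StraightOnKG ι)
    (u v : G) (t : ℝ) (ht : t ∈ Set.Icc (0:ℝ) 1) :
    dist (ι (kpt u v t ht)) (ι (vtx v)) = (1 - t) * dist (ι (vtx u)) (ι (vtx v)) := by
  have ht' : 1 - t ∈ Set.Icc (0:ℝ) 1 := ⟨by linarith [ht.2], by linarith [ht.1]⟩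
  rw [kpt_symm u v t ht ht', dist_comm, straight_left h v u (1 - t) ht', dist_comm (ι (vtx u))]

theorem straight_lip {G H : Type*} [MetricSpace H] {δ : ℝ} (h4 : FourPt H δ) {ι : KG G → H}
    (h : StraightOnKG ι) (u v : G) (s t : ℝ) (hs : s ∈ Set.Icc (0:ℝ) 1)
    (ht : t ∈ Set.Icc (0:ℝ) 1) :
    dist (ι (kpt u v s hs)) (ι (kpt u v t ht)) ≤
      |s - t| * dist (ι (vtx u)) (ι (vtx v)) + δ := by
  have h := h4 (ι (kpt u v s hs)) (ι (kpt u v t ht)) (ι (vtx u)) (ι (vtx v))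
  rw [dist_comm _ (ι (vtx u)), dist_comm _ (ι (vtx u))] at h
  rw [straight_left ‹_›, straight_left ‹_›, straight_right ‹_›, straight_right ‹_›] at h
  set L := dist (ι (vtx u)) (ι (vtx v))
  have hL : 0 ≤ L := dist_nonneg
  have e1 := mul_le_mul_of_nonneg_right (le_abs_self (s - t)) hL
  have e2 := mul_le_mul_of_nonneg_right (neg_le_abs (s - t)) hL
  have : max (s * L + (1 - t) * L) ((1 - s) * L + t * L) ≤ |s - t| * L + L :=
    max_le (by linarith) (by linarith)
  linarith

theorem countable_of_gen {G : Type*} [Group G] (S : Finset G)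
    (hgen : Subgroup.closure (S : Set G) = ⊤) : Countable G := by
  have : Group.FG G := ⟨⟨S, hgen⟩⟩
  obtain ⟨T, -, f, hf⟩ : ∃ T : Finset G, True ∧ ∃ f : FreeGroup T →* G, Function.Surjective f := by
    refine ⟨S, trivial, FreeGroup.lift Subtype.val, ?_⟩
    rw [← MonoidHom.range_eq_top, FreeGroup.range_lift_eq_closure]
    simpa using hgen
  have : Countable (FreeGroup T) := by unfold FreeGroup; infer_instance
  exact hf.countable

end Helpers

/-- For a blowing-up sequence of isometric actions of a finitely
generated group on a geodesic space with `Δ`-thin triangles, the rescaled pullback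
pseudo-metrics on the complete graph `K(G)` (based at approximate centers) subconverge
pointwise to a pseudo-metric whose associated metric space is an `ℝ`-tree. -/
theorem blowup_gives_rtree {G : Type u} [Group G]
    (S : Finset G) (hS : S.Nonempty) (hgen : Subgroup.closure (S : Set G) = ⊤)
    {H : Type v} [MetricSpace H] [Nonempty H] {Δ : ℝ} (hΔ : 0 < Δ)
    (hgeo : GeodesicSpace H) (hthin : ThinTriangles H Δ)
    (ρ : ℕ → G →* (H ≃ᵢ H))
    (hblow : ∃ α : G,
      Filter.Tendsto (fun n => translationLength (ρ n α)) Filter.atTop Filter.atTop)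
    (x : ℕ → H)
    (hcenter : ∀ n, ∀ y : H, rS S hS (ρ n) (x n) ≤ rS S hS (ρ n) y + 1)
    (ι : ℕ → KG G → H)
    (hvert : ∀ n, ∀ g : G, ι n (vtx g) = ρ n g (x n))
    (hstraight : ∀ n, StraightOnKG (ι n))
    (hequiv : ∀ n, ∀ g : G, ∀ p : KG G, ι n (leftMulKG g p) = ρ n g (ι n p)) :
    ∃ φ : ℕ → ℕ, StrictMono φ ∧
      ∃ dbar : KG G → KG G → ℝ,
        (∀ p, dbar p p = 0) ∧ (∀ p q, dbar p q = dbar q p) ∧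
        (∀ p q r, dbar p r ≤ dbar p q + dbar q r) ∧
        (∀ p q : KG G,
          Filter.Tendsto
            (fun i => rescaleFactor S hS (ι (φ i)) * dist (ι (φ i) p) (ι (φ i) q))
            Filter.atTop (nhds (dbar p q))) ∧
        ∃ (T : Type u) (_ : MetricSpace T) (qm : KG G → T),
          Function.Surjective qm ∧ (∀ p q', dist (qm p) (qm q') = dbar p q') ∧
          IsRTree T := by
  have hcount : Countable G := countable_of_gen S hgen
  have h4 := fourPt_of_thin hΔ hgeo hthin
  obtain ⟨R, hRdef⟩ : ∃ R : ℕ → ℝ, ∀ n,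
      R n = max 1 (S.sup' hS fun s => dist (ι n (vtx (1 : G))) (ι n (vtx s))) := ⟨_, fun _ => rfl⟩
  have hlam : ∀ n, rescaleFactor S hS (ι n) = (R n)⁻¹ := fun n => by
    rw [hRdef, rescaleFactor]
  have hR1 : ∀ n, 1 ≤ R n := fun n => by rw [hRdef]; exact le_max_left _ _
  have hRpos : ∀ n, 0 < R n := fun n => lt_of_lt_of_le one_pos (hR1 n)
  have hv1 : ∀ n, ι n (vtx 1) = x n := fun n => by rw [hvert, map_one]; rfl
  have hmul : ∀ n g h, dist (x n) (ρ n (g * h) (x n)) ≤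
      dist (x n) (ρ n g (x n)) + dist (x n) (ρ n h (x n)) := by
    intro n g h
    have := dist_triangle (x n) (ρ n g (x n)) (ρ n (g * h) (x n))
    rw [map_mul, IsometryEquiv.mul_apply, (ρ n g).isometry.dist_eq] at this
    rwa [map_mul, IsometryEquiv.mul_apply]
  have hinv : ∀ n g, dist (x n) (ρ n g⁻¹ (x n)) = dist (x n) (ρ n g (x n)) := by
    intro n g
    rw [← (ρ n g).isometry.dist_eq, ← IsometryEquiv.mul_apply, ← map_mul, mul_inv_cancel, map_one,
      dist_comm]
    rfl
  have hword : ∀ g : G, ∃ C : ℝ, ∀ n, dist (x n) (ρ n g (x n)) ≤ C * R n := by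
    intro g
    have hg : g ∈ Subgroup.closure (S : Set G) := by rw [hgen]; trivial
    induction hg using Subgroup.closure_induction with
    | mem s hs =>
      refine ⟨1, fun n => ?_⟩
      rw [one_mul, hRdef]
      refine le_trans ?_ (le_max_right _ _)
      have := Finset.le_sup' (fun s => dist (ι n (vtx (1 : G))) (ι n (vtx s))) hs
      simp only [hv1, hvert n s] at this
      simpa only [hv1] using this
    | one =>
      refine ⟨0, fun n => ?_⟩
      rw [map_one, zero_mul]
      exact (dist_self (x n)).le
    | mul g h _ _ hg hh =>
      obtain ⟨C, hC⟩ := hg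
      obtain ⟨D, hD⟩ := hh
      refine ⟨C + D, fun n => ?_⟩
      rw [add_mul]
      exact (hmul n g h).trans (add_le_add (hC n) (hD n))
    | inv g _ hg =>
      obtain ⟨C, hC⟩ := hg
      exact ⟨C, fun n => (hinv n g).trans_le (hC n)⟩
  have hedge : ∀ u v : G, ∃ C : ℝ, ∀ n, dist (ι n (vtx u)) (ι n (vtx v)) ≤ C * R n := by
    intro u v
    obtain ⟨C, hC⟩ := hword u
    obtain ⟨D, hD⟩ := hword v
    refine ⟨C + D, fun n => ?_⟩
    rw [hvert, hvert, add_mul]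
    have := dist_triangle_left (ρ n u (x n)) (ρ n v (x n)) (x n)
    linarith [hC n, hD n]
  have hbd : ∀ p : KG G, ∃ C : ℝ, ∀ n, dist (x n) (ι n p) ≤ C * R n := by
    intro p
    obtain ⟨u, v, t, ht, rfl⟩ := exists_kpt p
    obtain ⟨C, hC⟩ := hword u
    obtain ⟨D, hD⟩ := hedge u v
    refine ⟨C + D, fun n => ?_⟩
    have h1 := dist_triangle (x n) (ι n (vtx u)) (ι n (kpt u v t ht))
    have h2 := straight_left (hstraight n) u v t ht
    have h3 : t * dist (ι n (vtx u)) (ι n (vtx v)) ≤ 1 * dist (ι n (vtx u)) (ι n (vtx v)) :=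
      mul_le_mul_of_nonneg_right ht.2 dist_nonneg
    have h4 := hC n
    rw [← hvert] at h4
    rw [add_mul]
    linarith [hD n]
  have hRinf : Tendsto R atTop atTop := by
    obtain ⟨α, hα⟩ := hblow
    obtain ⟨C, hC⟩ := hword α
    have hle : ∀ n, translationLength (ρ n α) ≤ (|C| + 1) * R n := by
      intro n
      have h1 : translationLength (ρ n α) ≤ dist (x n) (ρ n α (x n)) :=
        ciInf_le ⟨0, by rintro _ ⟨y, rfl⟩; exact dist_nonneg⟩ (x n)
      have h2 : C * R n ≤ (|C| + 1) * R n :=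
        mul_le_mul_of_nonneg_right (by linarith [le_abs_self C]) (hRpos n).le
      linarith [hC n]
    exact (tendsto_const_mul_atTop_of_pos (by positivity : 0 < |C| + 1)).1
      (tendsto_atTop_mono hle hα)
  have hlam0 : Tendsto (fun n => (R n)⁻¹) atTop (nhds 0) := hRinf.inv_tendsto_atTop
  have hinvpos : ∀ n, 0 ≤ (R n)⁻¹ := fun n => (inv_pos.2 (hRpos n)).le
  obtain ⟨φ, hφ, dbar, hd⟩ := subseq_conv
    (I := G × G × {q : ℚ // (q : ℝ) ∈ Set.Icc (0:ℝ) 1})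
    (fun n p q => (R n)⁻¹ * dist (ι n p) (ι n q))
    (fun k => kpt k.1 k.2.1 (k.2.2.1 : ℝ) k.2.2.2)
    (fun n p q => mul_nonneg (hinvpos n) dist_nonneg)
    (fun n p q => by rw [dist_comm])
    (fun n p q r => by
      rw [← mul_add]
      exact mul_le_mul_of_nonneg_left (dist_triangle _ _ _) (hinvpos n))
    (fun p q => by
      obtain ⟨C, hC⟩ := hbd p
      obtain ⟨D, hD⟩ := hbd q
      refine ⟨C + D, fun n => ?_⟩
      rw [inv_mul_le_iff₀ (hRpos n), mul_comm, add_mul]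
      have := dist_triangle_left (ι n p) (ι n q) (x n)
      linarith [hC n, hD n])
    (fun p ε hε => by
      obtain ⟨u, v, t, ht, rfl⟩ := exists_kpt p
      obtain ⟨C, hC⟩ := hedge u v
      have hη : 0 < ε / (2 * (|C| + 1)) := by positivity
      obtain ⟨q, hq1, hq2⟩ := exists_rat_btwn
        (show max 0 (t - ε / (2 * (|C| + 1))) < min 1 (t + ε / (2 * (|C| + 1))) from
          max_lt (lt_min one_pos (by linarith [ht.1]))
            (lt_min (by linarith [ht.2]) (by linarith)))
      rw [max_lt_iff] at hq1
      rw [lt_min_iff] at hq2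
      have hqm : (q:ℝ) ∈ Set.Icc (0:ℝ) 1 := ⟨hq1.1.le, hq2.1.le⟩
      refine ⟨(u, v, ⟨q, hqm⟩), ?_⟩
      have hsmall : Tendsto (fun n => (R n)⁻¹ * (10 * Δ)) atTop (nhds 0) := by
        simpa using hlam0.mul_const (10 * Δ)
      filter_upwards [hsmall.eventually (gt_mem_nhds (half_pos hε))] with n hn
      have h1 := mul_le_mul_of_nonneg_left
        (straight_lip h4 (hstraight n) u v t q ht hqm) (hinvpos n)
      have h2 : |t - (q:ℝ)| ≤ ε / (2 * (|C| + 1)) := by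
        rw [abs_le]; constructor <;> linarith
      have h3 : (R n)⁻¹ * dist (ι n (vtx u)) (ι n (vtx v)) ≤ |C| + 1 := by
        rw [inv_mul_le_iff₀ (hRpos n), mul_comm]
        have : C * R n ≤ (|C| + 1) * R n :=
          mul_le_mul_of_nonneg_right (by linarith [le_abs_self C]) (hRpos n).le
        linarith [hC n]
      have h5 : |t - (q:ℝ)| * ((R n)⁻¹ * dist (ι n (vtx u)) (ι n (vtx v))) ≤
          ε / (2 * (|C| + 1)) * (|C| + 1) :=
        mul_le_mul h2 h3 (mul_nonneg (hinvpos n) dist_nonneg) hη.le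
      have h6 : ε / (2 * (|C| + 1)) * (|C| + 1) = ε / 2 := by
        field_simp
      rw [mul_add (R n)⁻¹] at h1
      have h7 : (R n)⁻¹ * (|t - (q:ℝ)| * dist (ι n (vtx u)) (ι n (vtx v))) =
        |t - (q:ℝ)| * ((R n)⁻¹ * dist (ι n (vtx u)) (ι n (vtx v))) := by ring
      show (R n)⁻¹ * dist (ι n (kpt u v t ht)) (ι n (kpt u v q hqm)) ≤ ε
      linarith)
  have hd0 : ∀ p, dbar p p = 0 := fun p =>
    tendsto_nhds_unique (hd p p) (by simp)
  have hdsymm : ∀ p q, dbar p q = dbar q p := fun p q =>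
    tendsto_nhds_unique (hd p q) (by simpa only [dist_comm] using hd q p)
  have hdtri : ∀ p q r, dbar p r ≤ dbar p q + dbar q r := fun p q r =>
    le_of_tendsto_of_tendsto' (hd p r) ((hd p q).add (hd q r)) fun n => by
      rw [← mul_add]
      exact mul_le_mul_of_nonneg_left (dist_triangle _ _ _) (hinvpos _)
  have hd4 : ∀ p q r s, dbar p q + dbar r s ≤
      max (dbar p r + dbar q s) (dbar p s + dbar q r) + 0 := fun p q r s => by
    have hz : Tendsto (fun n => (R (φ n))⁻¹ * (10 * Δ)) atTop (nhds 0) := by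
      simpa using (hlam0.comp hφ.tendsto_atTop).mul_const (10 * Δ)
    refine le_of_tendsto_of_tendsto' ((hd p q).add (hd r s))
      ((((hd p r).add (hd q s)).max ((hd p s).add (hd q r))).add hz) fun n => ?_
    have := mul_le_mul_of_nonneg_left
      (h4 (ι (φ n) p) (ι (φ n) q) (ι (φ n) r) (ι (φ n) s)) (hinvpos (φ n))
    rw [mul_add, mul_add, mul_max_of_nonneg _ _ (hinvpos (φ n)), mul_add, mul_add] at this
    exact this
  have hdl : ∀ u v t ht, dbar (vtx u) (kpt u v t ht) = t * dbar (vtx u) (vtx v) :=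
    fun u v t ht => tendsto_nhds_unique (hd _ _) (by
      refine ((hd (vtx u) (vtx v)).const_mul t).congr fun n => ?_
      rw [straight_left (hstraight _)]; ring)
  have hdr : ∀ u v t ht, dbar (kpt u v t ht) (vtx v) = (1 - t) * dbar (vtx u) (vtx v) :=
    fun u v t ht => tendsto_nhds_unique (hd _ _) (by
      refine ((hd (vtx u) (vtx v)).const_mul (1 - t)).congr fun n => ?_
      rw [straight_right (hstraight _)]; ring)
  refine ⟨φ, hφ, dbar, hd0, hdsymm, hdtri, ?_, ?_⟩
  · intro p q
    simpa only [hlam] using hd p q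
  · obtain ⟨T, hT, qm, hsurj, hqm⟩ := metric_quot dbar hd0 hdsymm hdtri
    refine ⟨T, hT, qm, hsurj, hqm, ?_⟩
    have hT4 : FourPt T 0 := by
      intro p q r s
      obtain ⟨p, rfl⟩ := hsurj p
      obtain ⟨q, rfl⟩ := hsurj q
      obtain ⟨r, rfl⟩ := hsurj r
      obtain ⟨s, rfl⟩ := hsurj s
      simp only [hqm]
      exact hd4 p q r s
    have hvv : ∀ u v : G, FullBtw (qm (vtx u)) (qm (vtx v)) := by
      intro u v t ht
      rw [hqm] at ht ⊢
      rcases (ht.1.trans ht.2).eq_or_lt with h | h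
      · have h0 : t = 0 := le_antisymm (h ▸ ht.2) ht.1
        refine ⟨qm (vtx u), ?_, ?_⟩
        · rw [dist_self, h0]
        · rw [hqm, h0, sub_zero]
      · have hmem : t / dbar (vtx u) (vtx v) ∈ Set.Icc (0:ℝ) 1 :=
          ⟨div_nonneg ht.1 h.le, (div_le_one h).2 ht.2⟩
        refine ⟨qm (kpt u v (t / dbar (vtx u) (vtx v)) hmem), ?_, ?_⟩
        · rw [hqm, hdl, div_mul_cancel₀ _ h.ne']
        · rw [hqm, hdr, sub_mul, div_mul_cancel₀ _ h.ne', one_mul]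
    have hvp : ∀ p : KG G, ∃ u : G, FullBtw (qm (vtx u)) (qm p) := by
      intro p
      obtain ⟨u, v, t, ht, rfl⟩ := exists_kpt p
      refine ⟨u, (hvv u v).sub hT4 ?_⟩
      rw [hqm, hqm, hqm, hdl, hdr]
      ring
    refine rtree_of_full hT4 fun a b => ?_
    obtain ⟨p, rfl⟩ := hsurj a
    obtain ⟨q, rfl⟩ := hsurj b
    obtain ⟨u, hu⟩ := hvp p
    obtain ⟨v, hv⟩ := hvp q
    exact (hu.symm.trans hT4 (hvv u v)).trans hT4 hv
end

section
/- In the setting of the rescaled limit of a blowing-up sequence of representations (G finitely generated with finite generating set S, H a geodesic space with Δ-thin triangles, ρ_n : G → Isom(H) blowing up, K the complete graph on G, approximate centers x_n, equivariant straight maps ι_n with ι_n(g) = ρ_n(g)x_n, rescaling factors λ_n, and a subsequence along which λ_n · ι_n*d_H converges pointwise to a pseudo-metric d̄ with associated ℝ-tree Γ): the left-multiplication action of G on K induces an action of G on Γ by isometries that has no global fixed point; moreover some element of G acts on Γ as a hyperbolic isometry. -/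
open Set Filter Metric

open scoped Classical

section TreeHelpers

variable {X : Type*} [MetricSpace X]

lemma arc_of_lip (δ : ℝ → X) (A B : ℝ) (hAB : A < B)
    (hl : ∀ s ∈ Set.Icc A B, ∀ t ∈ Set.Icc A B, dist (δ s) (δ t) ≤ |s - t|)
    (hi : ∀ s ∈ Set.Icc A B, ∀ t ∈ Set.Icc A B, δ s = δ t → s = t) :
    IsArcParam (fun t => δ (A + (B - A) * t)) (δ A) (δ B) ∧
      (fun t => δ (A + (B - A) * t)) '' Set.Icc 0 1 = δ '' Set.Icc A B := by
  have hm : ∀ t ∈ Set.Icc (0:ℝ) 1, A + (B - A) * t ∈ Set.Icc A B := by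
    intro t ht
    constructor <;> nlinarith [ht.1, ht.2]
  refine ⟨⟨?_, ?_, by simp, by simp⟩, ?_⟩
  · have : LipschitzOnWith (Real.toNNReal (B - A)) (fun t => δ (A + (B - A) * t))
        (Set.Icc 0 1) := by
      apply LipschitzOnWith.of_dist_le_mul
      intro s hs t ht
      refine (hl _ (hm s hs) _ (hm t ht)).trans ?_
      rw [Real.coe_toNNReal _ (by linarith), Real.dist_eq]
      have : A + (B - A) * s - (A + (B - A) * t) = (B - A) * (s - t) := by ring
      rw [this, abs_mul, abs_of_pos (by linarith)]
    exact this.continuousOn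
  · intro s hs t ht h
    have := hi _ (hm s hs) _ (hm t ht) h
    have h2 : (B - A) * s = (B - A) * t := by linarith
    exact mul_left_cancel₀ (by linarith) h2
  · ext y
    constructor
    · rintro ⟨t, ht, rfl⟩
      exact ⟨_, hm t ht, rfl⟩
    · rintro ⟨r, hr, rfl⟩
      have hpos : 0 < B - A := by linarith
      refine ⟨(r - A) / (B - A), ⟨?_, ?_⟩, ?_⟩
      · exact div_nonneg (by linarith [hr.1]) hpos.le
      · rw [div_le_one hpos]; linarith [hr.2]
      · have : A + (B - A) * ((r - A) / (B - A)) = r := by field_simp; ring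
        simp only [this]

lemma concat_mem (ht : IsRTree X) (γ₁ γ₂ β : ℝ → X) (L₁ L₂ : ℝ) (h₁ : 0 ≤ L₁) (h₂ : 0 ≤ L₂)
    (hi₁ : ∀ s ∈ Set.Icc 0 L₁, ∀ t ∈ Set.Icc 0 L₁, dist (γ₁ s) (γ₁ t) = |s - t|)
    (hi₂ : ∀ s ∈ Set.Icc 0 L₂, ∀ t ∈ Set.Icc 0 L₂, dist (γ₂ s) (γ₂ t) = |s - t|)
    (h0 : γ₁ 0 = γ₂ 0) (hne : γ₁ L₁ ≠ γ₂ L₂)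
    (hdisj : ∀ s ∈ Set.Icc 0 L₁, ∀ t ∈ Set.Icc 0 L₂, γ₁ s = γ₂ t → s = 0 ∧ t = 0)
    (hβ : IsGeodesicSegment β (γ₁ L₁) (γ₂ L₂)) :
    ∃ u ∈ Set.Icc 0 (dist (γ₁ L₁) (γ₂ L₂)), β u = γ₁ 0 := by
  have hL : -L₁ < L₂ := by
    by_contra hcon
    have e1 : L₁ = 0 := by linarith
    have e2 : L₂ = 0 := by linarith
    subst e1
    subst e2
    exact hne h0
  set δ : ℝ → X := fun r => if r ≤ 0 then γ₁ (-r) else γ₂ r with hδ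
  have hmix : ∀ s ∈ Set.Icc (-L₁) L₂, ∀ t ∈ Set.Icc (-L₁) L₂, s ≤ 0 → 0 < t →
      dist (γ₁ (-s)) (γ₂ t) ≤ |s - t| := by
    intro s hs t ht hs0 ht0
    have a1 := hi₁ (-s) ⟨by linarith, by linarith [hs.1]⟩ 0 ⟨le_refl _, h₁⟩
    have a2 := hi₂ 0 ⟨le_refl _, h₂⟩ t ⟨ht0.le, ht.2⟩
    have a3 := dist_triangle (γ₁ (-s)) (γ₁ 0) (γ₂ t)
    rw [sub_zero, abs_of_nonneg (by linarith)] at a1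
    rw [zero_sub, abs_neg, abs_of_pos ht0] at a2
    rw [a1, h0, a2] at a3
    rw [abs_of_nonpos (by linarith)]
    linarith
  have hl : ∀ s ∈ Set.Icc (-L₁) L₂, ∀ t ∈ Set.Icc (-L₁) L₂, dist (δ s) (δ t) ≤ |s - t| := by
    intro s hs t ht
    simp only [hδ]
    split_ifs with c1 c2 c2
    · rw [hi₁ _ ⟨by linarith, by linarith [hs.1]⟩ _ ⟨by linarith, by linarith [ht.1]⟩]
      rw [abs_sub_comm s t]
      apply le_of_eq; congr 1; ring
    · exact hmix s hs t ht c1 (not_le.1 c2)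
    · rw [dist_comm, abs_sub_comm]
      exact hmix t ht s hs c2 (not_le.1 c1)
    · exact (hi₂ _ ⟨by linarith, hs.2⟩ _ ⟨by linarith, ht.2⟩).le
  have hinj : ∀ s ∈ Set.Icc (-L₁) L₂, ∀ t ∈ Set.Icc (-L₁) L₂, δ s = δ t → s = t := by
    intro s hs t ht
    simp only [hδ]
    split_ifs with c1 c2 c2
    · intro h
      have := hi₁ (-s) ⟨by linarith, by linarith [hs.1]⟩ (-t) ⟨by linarith, by linarith [ht.1]⟩
      rw [h, dist_self] at this
      have := abs_eq_zero.1 this.symm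
      linarith
    · intro h
      have := hdisj (-s) ⟨by linarith, by linarith [hs.1]⟩ t ⟨by linarith, ht.2⟩ h
      linarith [this.1, this.2]
    · intro h
      have := hdisj (-t) ⟨by linarith, by linarith [ht.1]⟩ s ⟨by linarith, hs.2⟩ h.symm
      linarith [this.1, this.2]
    · intro h
      have := hi₂ s ⟨by linarith, hs.2⟩ t ⟨by linarith, ht.2⟩
      rw [h, dist_self] at this
      have := abs_eq_zero.1 this.symm
      linarith
  have hδA : δ (-L₁) = γ₁ L₁ := by simp [hδ, h₁]
  have hδB : δ L₂ = γ₂ L₂ := by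
    simp only [hδ]
    split_ifs with c
    · have : L₂ = 0 := le_antisymm c h₂
      rw [this, neg_zero, h0]
    · rfl
  obtain ⟨arc1, im1⟩ := arc_of_lip δ (-L₁) L₂ hL hl hinj
  have hd : 0 < dist (γ₁ L₁) (γ₂ L₂) := dist_pos.2 hne
  obtain ⟨b0, b1, b2⟩ := hβ
  obtain ⟨arc2, im2⟩ := arc_of_lip β 0 _ hd (fun s hs t ht => (b2 s hs t ht).le) (by
    intro s hs t ht h
    have := b2 s hs t ht
    rw [h, dist_self] at this
    have := abs_eq_zero.1 this.symm
    linarith)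
  rw [hδA, hδB] at arc1
  rw [b0, b1] at arc2
  have := ht.2 _ _ _ _ arc1 arc2
  rw [im1, im2] at this
  have hp : γ₁ 0 ∈ δ '' Set.Icc (-L₁) L₂ :=
    ⟨0, ⟨by linarith, h₂⟩, by simp [hδ]⟩
  rw [this] at hp
  exact hp

lemma geod_btw {γ : ℝ → X} {a b : X} (hγ : IsGeodesicSegment γ a b) {s : ℝ}
    (hs : s ∈ Set.Icc 0 (dist a b)) : dist a (γ s) = s ∧ dist (γ s) b = dist a b - s := by
  obtain ⟨h0, h1, h2⟩ := hγ
  constructor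
  · have := h2 0 ⟨le_refl _, dist_nonneg⟩ s hs
    rw [h0, zero_sub, abs_neg, abs_of_nonneg hs.1] at this
    exact this
  · have := h2 s hs _ ⟨dist_nonneg, le_refl _⟩
    rw [h1, abs_sub_comm, abs_of_nonneg (by linarith [hs.2])] at this
    exact this

lemma btw_mem (ht : IsRTree X) {γ : ℝ → X} {a b p : X} (hγ : IsGeodesicSegment γ a b)
    (hp : dist a p + dist p b = dist a b) : γ (dist a p) = p := by
  by_cases hab : a = b
  · subst hab
    have : dist a p = 0 := by
      have := dist_nonneg (x := a) (y := p)
      rw [dist_comm p a, dist_self] at hp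
      linarith
    rw [this, hγ.1]
    exact dist_eq_zero.1 this
  obtain ⟨γ₁, g1⟩ := ht.1 p a
  obtain ⟨γ₂, g2⟩ := ht.1 p b
  have key := concat_mem ht γ₁ γ₂ γ (dist p a) (dist p b) dist_nonneg dist_nonneg g1.2.2 g2.2.2
    (by rw [g1.1, g2.1]) (by rw [g1.2.1, g2.2.1]; exact hab)
    (by
      intro s hs t ht' h
      have e1 := (geod_btw g1 hs).2
      have e2 := (geod_btw g2 ht').2
      have tri := dist_triangle a (γ₁ s) b
      rw [dist_comm a (γ₁ s), e1] at tri
      rw [h, e2, ← hp, dist_comm p a] at tri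
      constructor <;> linarith [hs.1, ht'.1])
    (by rw [g1.2.1, g2.2.1]; exact hγ)
  rw [g1.2.1, g2.2.1, g1.1] at key
  obtain ⟨u, hu, hup⟩ := key
  have := (geod_btw hγ hu).1
  rw [hup] at this
  rw [this, hup]

lemma exists_median (ht : IsRTree X) (a b c : X) : ∃ m, dist a m + dist m b = dist a b ∧
    dist a m + dist m c = dist a c ∧ dist b m + dist m c = dist b c := by
  by_cases hbc : b = c
  · subst hbc
    exact ⟨b, by simp, by simp, by simp⟩
  obtain ⟨γ₁, g1⟩ := ht.1 a b
  obtain ⟨γ₂, g2⟩ := ht.1 a c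
  obtain ⟨β, hβ⟩ := ht.1 b c
  have cont : ∀ {γ : ℝ → X} {d : X}, IsGeodesicSegment γ a d →
      ContinuousOn γ (Set.Icc 0 (dist a d)) := by
    intro γ d h
    have : LipschitzOnWith 1 γ (Set.Icc 0 (dist a d)) := by
      apply LipschitzOnWith.of_dist_le_mul
      intro s hs t ht
      rw [h.2.2 s hs t ht, Real.dist_eq]; simp
    exact this.continuousOn
  set M := min (dist a b) (dist a c) with hM
  have hM0 : 0 ≤ M := le_min dist_nonneg dist_nonneg
  have sub1 : Set.Icc 0 M ⊆ Set.Icc 0 (dist a b) := Set.Icc_subset_Icc_right (min_le_left _ _)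
  have sub2 : Set.Icc 0 M ⊆ Set.Icc 0 (dist a c) := Set.Icc_subset_Icc_right (min_le_right _ _)
  set E := Set.Icc 0 M ∩ (fun t => dist (γ₁ t) (γ₂ t)) ⁻¹' {0} with hE
  have hEc : IsClosed E :=
    ContinuousOn.preimage_isClosed_of_isClosed
      (continuous_dist.comp_continuousOn (((cont g1).mono sub1).prodMk ((cont g2).mono sub2))) isClosed_Icc isClosed_singleton
  have hEk : IsCompact E := isCompact_Icc.of_isClosed_subset hEc Set.inter_subset_left
  have hEn : E.Nonempty := ⟨0, ⟨le_refl _, hM0⟩, by simp [g1.1, g2.1]⟩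
  obtain ⟨t0, ht0, hmax⟩ := hEk.exists_isGreatest hEn
  have heq : γ₁ t0 = γ₂ t0 := dist_eq_zero.1 ht0.2
  have m1 := sub1 ht0.1
  have m2 := sub2 ht0.1
  have key := concat_mem ht (fun s => γ₁ (t0 + s)) (fun s => γ₂ (t0 + s)) β
    (dist a b - t0) (dist a c - t0) (by linarith [m1.2]) (by linarith [m2.2])
    (by
      intro s hs t ht
      rw [g1.2.2 _ ⟨by linarith [hs.1, m1.1], by linarith [hs.2]⟩ _
        ⟨by linarith [ht.1, m1.1], by linarith [ht.2]⟩]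
      congr 1; ring)
    (by
      intro s hs t ht
      rw [g2.2.2 _ ⟨by linarith [hs.1, m1.1], by linarith [hs.2]⟩ _
        ⟨by linarith [ht.1, m1.1], by linarith [ht.2]⟩]
      congr 1; ring)
    (by simpa using heq)
    (by simpa [g1.2.1, g2.2.1] using hbc)
    (by
      intro s hs t ht h
      have i1 : t0 + s ∈ Set.Icc 0 (dist a b) := ⟨by linarith [hs.1, m1.1], by linarith [hs.2]⟩
      have i2 : t0 + t ∈ Set.Icc 0 (dist a c) := ⟨by linarith [ht.1, m1.1], by linarith [ht.2]⟩
      have e1 := (geod_btw g1 i1).1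
      have e2 := (geod_btw g2 i2).1
      rw [h, e2] at e1
      have hst : t = s := by linarith
      subst hst
      have : t0 + t ∈ E := ⟨⟨i1.1, le_min i1.2 i2.2⟩, by simp [h]⟩
      have := hmax this
      constructor <;> linarith [ht.1])
    (by simpa [g1.2.1, g2.2.1] using hβ)
  simp only [add_sub_cancel, g1.2.1, g2.2.1, add_zero] at key
  obtain ⟨u, hu, hup⟩ := key
  refine ⟨γ₁ t0, ?_, ?_, ?_⟩
  · have := geod_btw g1 m1
    linarith [this.1, this.2]
  · have := geod_btw g2 m2
    rw [heq]
    linarith [this.1, this.2]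
  · rw [← hup]
    have := geod_btw hβ hu
    linarith [this.1, this.2]

lemma four_pt (ht : IsRTree X) (x y z w : X) :
    dist x y + dist z w ≤ max (dist x z + dist y w) (dist x w + dist y z) := by
  obtain ⟨m1, p1, p2, p3⟩ := exists_median ht w x z
  obtain ⟨m2, q1, q2, q3⟩ := exists_median ht w z y
  obtain ⟨γ, hγ⟩ := ht.1 w z
  have e1 := btw_mem ht hγ p2
  have e2 := btw_mem ht hγ q1
  have hd := hγ.2.2 (dist w m1) ⟨dist_nonneg, by linarith [dist_nonneg (x := m1) (y := z)]⟩
    (dist w m2) ⟨dist_nonneg, by linarith [dist_nonneg (x := m2) (y := z)]⟩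
  rw [e1, e2] at hd
  have t1 := dist_triangle4 x m1 m2 y
  have c1 := dist_comm x m1
  have c2 := dist_comm y w
  have c3 := dist_comm x w
  have c4 := dist_comm y z
  have c5 := dist_comm z w
  have c6 := dist_comm z m2
  rcases le_total (dist w m1) (dist w m2) with h | h
  · rw [abs_of_nonpos (by linarith)] at hd
    apply le_max_of_le_left
    linarith
  · rw [abs_of_nonneg (by linarith)] at hd
    apply le_max_of_le_right
    linarith

lemma btw_unique (ht : IsRTree X) {a b p q : X} (hp : dist a p + dist p b = dist a b)
    (hq : dist a q + dist q b = dist a b) (h : dist a p = dist a q) : p = q := by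
  obtain ⟨γ, hγ⟩ := ht.1 a b
  rw [← btw_mem ht hγ hp, ← btw_mem ht hγ hq, h]

lemma exists_mid (ht : IsRTree X) (a b : X) : ∃ m, dist a m = dist a b / 2 ∧
    dist m b = dist a b / 2 := by
  obtain ⟨γ, hγ⟩ := ht.1 a b
  have := dist_nonneg (x := a) (y := b)
  have h := geod_btw hγ (s := dist a b / 2) ⟨by linarith, by linarith⟩
  exact ⟨_, h.1, by linarith [h.2]⟩

lemma elliptic_mid (ht : IsRTree X) (h : X ≃ᵢ X) {f z m : X} (hf : h f = f)
    (m1 : dist z m = dist z (h z) / 2) (m2 : dist m (h z) = dist z (h z) / 2) : h m = m := by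
  have hfz : dist f (h z) = dist f z := by
    conv_lhs => rw [← hf]
    exact h.dist_eq f z
  have hfm : dist f (h m) = dist f m := by
    conv_lhs => rw [← hf]
    exact h.dist_eq f m
  have hzm : dist (h m) (h z) = dist m z := h.dist_eq m z
  have k := four_pt ht f m z (h z)
  have hk : dist f m ≤ dist f z - dist z (h z) / 2 := by
    have c := dist_comm m z
    have : dist f m + dist z (h z) ≤ dist f z + dist z (h z) / 2 :=
      k.trans (max_le (by linarith) (by linarith))
    linarith
  have t := dist_triangle f m z
  have c := dist_comm m z
  symm
  apply btw_unique ht (a := f) (b := h z)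
  · linarith
  · linarith
  · linarith

lemma common_fixed (ht : IsRTree X) (g h : X ≃ᵢ X) (hg : ∃ x, g x = x) (hh : ∃ x, h x = x)
    (hgh : ∃ x, g (h x) = x) : ∃ x, g x = x ∧ h x = x := by
  obtain ⟨a, ha⟩ := hg
  obtain ⟨b, hb⟩ := hh
  obtain ⟨z, hz⟩ := hgh
  obtain ⟨m, m1, m2⟩ := exists_mid ht z (h z)
  refine ⟨m, elliptic_mid ht g (z := h z) ha ?_ ?_, elliptic_mid ht h hb m1 m2⟩
  · rw [hz, dist_comm (h z) z, dist_comm]; exact m2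
  · rw [hz, dist_comm (h z) z, dist_comm]; exact m1

def TConvex (A : Set X) : Prop :=
  ∀ a ∈ A, ∀ b ∈ A, ∀ m, dist a m + dist m b = dist a b → m ∈ A

lemma helly3 (ht : IsRTree X) {A B C : Set X} (hA : TConvex A) (hB : TConvex B) (hC : TConvex C)
    (h1 : (A ∩ B).Nonempty) (h2 : (A ∩ C).Nonempty) (h3 : (B ∩ C).Nonempty) :
    ((A ∩ C) ∩ (B ∩ C)).Nonempty := by
  obtain ⟨a, a1, a2⟩ := h1
  obtain ⟨b, b1, b2⟩ := h2
  obtain ⟨c, c1, c2⟩ := h3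
  obtain ⟨m, p, q, r⟩ := exists_median ht a b c
  exact ⟨m, ⟨hA a a1 b b1 m p, hC b b2 c c2 m r⟩, ⟨hB a a2 c c1 m q, hC b b2 c c2 m r⟩⟩

lemma helly (ht : IsRTree X) [Nonempty X] {I : Type*} (S : Finset I) :
    ∀ F : I → Set X, (∀ i ∈ S, TConvex (F i)) → (∀ i ∈ S, ∀ j ∈ S, (F i ∩ F j).Nonempty) →
      ∃ x, ∀ i ∈ S, x ∈ F i := by
  induction S using Finset.induction_on with
  | empty => intro F _ _; exact ⟨Classical.arbitrary X, by simp⟩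
  | insert k S hk ih =>
    intro F hc hi
    by_cases hS : S.Nonempty
    · obtain ⟨x, hx⟩ := ih (fun i => F i ∩ F k) (by
        intro i hi' a ha b hb m hm
        exact ⟨hc i (Finset.mem_insert_of_mem hi') a ha.1 b hb.1 m hm,
          hc k (Finset.mem_insert_self _ _) a ha.2 b hb.2 m hm⟩) (by
        intro i hi' j hj'
        have ki := Finset.mem_insert_self k S
        have ii := Finset.mem_insert_of_mem (b := k) hi'
        have jj := Finset.mem_insert_of_mem (b := k) hj'
        exact helly3 ht (hc i ii) (hc j jj) (hc k ki) (hi i ii j jj) (hi i ii k ki)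
          (hi j jj k ki))
      obtain ⟨j, hj⟩ := hS
      refine ⟨x, fun i hi' => ?_⟩
      rcases Finset.mem_insert.1 hi' with rfl | h
      · exact (hx j hj).2
      · exact (hx i h).1
    · rw [Finset.not_nonempty_iff_eq_empty] at hS
      subst hS
      obtain ⟨x, hx, _⟩ := hi k (by simp) k (by simp)
      exact ⟨x, by simpa using hx⟩

lemma fix_convex (ht : IsRTree X) (g : X ≃ᵢ X) : TConvex {x | g x = x} := by
  intro a ha b hb m hm
  have ha' : g a = a := ha
  have hb' : g b = b := hb
  have e1 : dist a (g m) = dist a m := by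
    conv_lhs => rw [← ha']
    exact g.dist_eq a m
  have e2 : dist (g m) b = dist m b := by
    conv_lhs => rw [← hb']
    exact g.dist_eq m b
  exact btw_unique ht (by linarith) hm e1

/-- An isometry without fixed points of a real tree is hyperbolic. -/
lemma hyperbolic_of_no_fixed (ht : IsRTree X) [Nonempty X] (g : X ≃ᵢ X)
    (hg : ¬ ∃ x, g x = x) : IsHyperbolicIsom g := by
  obtain ⟨x⟩ := ‹Nonempty X›
  have D : ∀ a b : X, dist (g a) (g b) = dist a b := fun a b => g.dist_eq a b
  obtain ⟨m, hm1, hm2⟩ := exists_mid ht x (g x)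
  set a := dist x (g x) with ha
  set b := dist x (g (g x)) with hb
  have hle : dist m (g m) ≤ max 0 (b - a) := by
    have k1 := four_pt ht m (g (g x)) x (g x)
    have k2 := four_pt ht m (g m) (g x) (g (g x))
    have c1 := dist_comm m x
    have c2 := dist_comm (g (g x)) (g x)
    have c3 := dist_comm (g (g x)) x
    have d1 := D x (g x)
    have d2 := D x m
    have d3 := D m (g x)
    have c4 := dist_comm (g x) (g m)
    rcases le_total b a with h | h
    · rw [max_eq_left (by linarith)]
      have k1' : dist m (g (g x)) + a ≤ 3 / 2 * a := k1.trans (max_le (by linarith) (by linarith))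
      have : dist m (g m) + dist (g x) (g (g x)) ≤ a :=
        k2.trans (max_le (by linarith) (by linarith))
      linarith
    · rw [max_eq_right (by linarith)]
      have k1' : dist m (g (g x)) + a ≤ a / 2 + b := k1.trans (max_le (by linarith) (by linarith))
      have : dist m (g m) + dist (g x) (g (g x)) ≤ b :=
        k2.trans (max_le (by linarith) (by linarith))
      linarith
  have hab : a < b := by
    by_contra hcon
    rw [max_eq_left (by linarith)] at hle
    exact hg ⟨m, (dist_le_zero.1 hle).symm⟩
  rw [max_eq_right (by linarith)] at hle
  set ℓ := b - a with hℓ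
  have hℓ0 : 0 < ℓ := by linarith
  have h2 : 2 * ℓ ≤ dist m (g (g m)) := by
    have k := four_pt ht x (g (g x)) (g x) (g (g (g x)))
    have d1 := D x (g (g x))
    have d2 := D (g x) (g (g x))
    have d3 := D x (g x)
    have c1 := dist_comm (g (g x)) (g x)
    have k' : a + 2 * ℓ ≤ dist x (g (g (g x))) := by
      rcases le_max_iff.1 k with h | h <;> linarith
    have t := dist_triangle4 x m (g (g m)) (g (g (g x)))
    have d4 := D (g m) (g (g x))
    have d5 := D m (g x)
    linarith
  have hm : dist m (g m) = ℓ := by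
    have t := dist_triangle m (g m) (g (g m))
    have d := D m (g m)
    linarith

  have Dz : ∀ (k : ℤ) (p q : X), dist ((g ^ k) p) ((g ^ k) q) = dist p q :=
    fun k p q => (g ^ k).dist_eq p q
  have zadd : ∀ (i j : ℤ) (p : X), (g ^ (i + j)) p = (g ^ i) ((g ^ j) p) := by
    intro i j p; rw [zpow_add]; rfl
  have z1 : ∀ p : X, (g ^ (1:ℤ)) p = g p := by intro p; rw [zpow_one]
  have z0 : ∀ p : X, (g ^ (0:ℤ)) p = p := by intro p; rw [zpow_zero]; rfl
  have upper : ∀ n : ℕ, dist m ((g ^ (n:ℤ)) m) ≤ n * ℓ := by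
    intro n
    induction n with
    | zero => simp
    | succ n ih =>
      have t := dist_triangle m ((g ^ (n:ℤ)) m) ((g ^ ((n+1 : ℕ):ℤ)) m)
      have : dist ((g ^ (n:ℤ)) m) ((g ^ ((n+1 : ℕ):ℤ)) m) = ℓ := by
        push_cast
        rw [zadd, z1, Dz, hm]
      push_cast at *
      linarith
  have exact2 : ∀ n : ℕ, dist m ((g ^ (n:ℤ)) m) = n * ℓ ∧
      dist m ((g ^ ((n+1:ℕ):ℤ)) m) = (n + 1) * ℓ := by
    intro n
    induction n with
    | zero => simp [hm]
    | succ n ih =>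
      refine ⟨by push_cast at *; exact ih.2, ?_⟩
      apply le_antisymm
      · have := upper (n + 1 + 1)
        push_cast at *
        exact this
      · rcases Nat.eq_zero_or_pos n with h0 | hpos
        · subst h0
          have : (g ^ ((0 + 1 + 1 : ℕ):ℤ)) m = g (g m) := by
            have h11 : ((0 + 1 + 1 : ℕ):ℤ) = 1 + 1 := by norm_num
            rw [h11, zadd, z1, z1]
          rw [this]
          push_cast
          linarith
        · have hn : (1:ℝ) ≤ n := by exact_mod_cast hpos
          have k := four_pt ht m ((g ^ ((n+1:ℕ):ℤ)) m) (g m) ((g ^ ((n+1+1:ℕ):ℤ)) m)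
          have e1 : dist (g m) ((g ^ ((n+1+1:ℕ):ℤ)) m) = dist m ((g ^ ((n+1:ℕ):ℤ)) m) := by
            have : ((n+1+1:ℕ):ℤ) = 1 + ((n+1:ℕ):ℤ) := by push_cast; ring
            rw [this, zadd, z1, D]
          have e2 : dist ((g ^ ((n+1:ℕ):ℤ)) m) (g m) = dist m ((g ^ (n:ℤ)) m) := by
            have : ((n+1:ℕ):ℤ) = 1 + (n:ℤ) := by push_cast; ring
            rw [this, zadd, z1, D, dist_comm]
          have e3 : dist ((g ^ ((n+1:ℕ):ℤ)) m) ((g ^ ((n+1+1:ℕ):ℤ)) m) = ℓ := by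
            have : ((n+1+1:ℕ):ℤ) = ((n+1:ℕ):ℤ) + 1 := by push_cast; ring
            rw [this, zadd _ 1, z1, Dz, hm]
          rw [e1, e2, e3, hm, ih.1, ih.2] at k
          push_cast at *
          rcases le_max_iff.1 k with h | h
          · nlinarith
          · linarith
  have hpow : ∀ i j : ℤ, i ≤ j → dist ((g ^ i) m) ((g ^ j) m) = (j - i) * ℓ := by
    intro i j hij
    obtain ⟨n, hn⟩ := Int.eq_ofNat_of_zero_le (sub_nonneg.2 hij)
    have : j = i + n := by omega
    subst this
    rw [zadd, Dz, (exact2 n).1]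
    push_cast; ring
  obtain ⟨γ, hγ⟩ := ht.1 m (g m)
  rw [IsGeodesicSegment, hm] at hγ
  obtain ⟨γ0, γ1, γi⟩ := hγ
  set e : ℝ → X := fun t => (g ^ ⌊t / ℓ⌋) (γ (t - ℓ * ⌊t / ℓ⌋)) with he
  have hfr : ∀ t : ℝ, t - ℓ * ⌊t / ℓ⌋ ∈ Set.Icc 0 ℓ := by
    intro t
    have h1 := Int.floor_le (t / ℓ)
    have h2 := Int.lt_floor_add_one (t / ℓ)
    rw [le_div_iff₀ hℓ0] at h1
    rw [div_lt_iff₀ hℓ0] at h2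
    constructor <;> nlinarith
  have hge : ∀ t, e (t + ℓ) = g (e t) := by
    intro t
    have : (t + ℓ) / ℓ = t / ℓ + 1 := by field_simp
    simp only [he, this, Int.floor_add_one]
    rw [add_comm ⌊t / ℓ⌋ 1, zadd, z1]
    congr 3
    push_cast; ring
  have heint : ∀ k : ℤ, e (k * ℓ) = (g ^ k) m := by
    intro k
    have : (k * ℓ) / ℓ = (k : ℝ) := by field_simp
    simp only [he, this, Int.floor_intCast]
    rw [mul_comm, sub_self, γ0]
  have eleft : ∀ t, dist ((g ^ ⌊t / ℓ⌋) m) (e t) = t - ℓ * ⌊t / ℓ⌋ := by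
    intro t
    simp only [he]
    rw [Dz]
    have := γi 0 ⟨le_refl _, hℓ0.le⟩ _ (hfr t)
    rw [γ0, zero_sub, abs_neg, abs_of_nonneg (hfr t).1] at this
    exact this
  have eright : ∀ t, dist (e t) ((g ^ (⌊t / ℓ⌋ + 1)) m) = ℓ - (t - ℓ * ⌊t / ℓ⌋) := by
    intro t
    simp only [he]
    rw [zadd, z1, Dz]
    have := γi _ (hfr t) ℓ ⟨hℓ0.le, le_refl _⟩
    rw [γ1, abs_sub_comm, abs_of_nonneg (by linarith [(hfr t).2])] at this
    exact this
  have lip : ∀ s t, s ≤ t → dist (e s) (e t) ≤ t - s := by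
    intro s t hst
    have hfl : ⌊s / ℓ⌋ ≤ ⌊t / ℓ⌋ := Int.floor_le_floor (by gcongr)
    rcases hfl.eq_or_lt with h | h
    · have h1 := hfr s
      have h2 := hfr t
      simp only [he]
      rw [h] at h1 ⊢
      rw [Dz, γi _ h1 _ h2, abs_of_nonpos (by linarith)]
      linarith
    · have h1 := eright s
      have h2 := eleft t
      have h3 := hpow (⌊s / ℓ⌋ + 1) ⌊t / ℓ⌋ h
      have := dist_triangle4 (e s) ((g ^ (⌊s / ℓ⌋ + 1)) m) ((g ^ ⌊t / ℓ⌋) m) (e t)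
      push_cast at h3
      rw [h1, h2, h3] at this
      nlinarith
  have iso1 : ∀ s t, s ≤ t → dist (e s) (e t) = t - s := by
    intro s t hst
    apply le_antisymm (lip s t hst)
    have i1 : (⌊s / ℓ⌋ : ℝ) * ℓ ≤ s := by
      have := (hfr s).1; linarith
    have i2 : t ≤ ((⌊t / ℓ⌋ + 1 : ℤ) : ℝ) * ℓ := by
      have := (hfr t).2; push_cast; linarith
    have l1 := lip _ _ i1
    have l2 := lip _ _ i2
    have hfl : ⌊s / ℓ⌋ ≤ ⌊t / ℓ⌋ := Int.floor_le_floor (by gcongr)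
    have h3 := hpow ⌊s / ℓ⌋ (⌊t / ℓ⌋ + 1) (by omega)
    rw [heint] at l1 l2
    have := dist_triangle4 ((g ^ ⌊s / ℓ⌋) m) (e s) (e t) ((g ^ (⌊t / ℓ⌋ + 1)) m)
    rw [h3] at this
    nlinarith
  have iso : ∀ s t, dist (e s) (e t) = |s - t| := by
    intro s t
    rcases le_total s t with h | h
    · rw [iso1 s t h, abs_of_nonpos (by linarith)]; ring
    · rw [dist_comm, iso1 t s h, abs_of_nonneg (by linarith)]
  have main : ∀ y : X, ∃ t0, dist y (g y) ≥ 2 * dist y (e t0) + ℓ := by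
    intro y
    set N := dist y (e 0) + ℓ with hN
    set M := N + ℓ with hM
    have hy0 := dist_nonneg (x := y) (y := e 0)
    set t0 := (dist y (e (-M)) - dist y (e M)) / 2 with ht0
    have b1 : |t0| ≤ M := by
      have t1 := dist_triangle y (e M) (e (-M))
      have t2 := dist_triangle y (e (-M)) (e M)
      have c : dist (e M) (e (-M)) = 2 * M := by
        rw [iso, abs_of_nonneg (by linarith)]; ring
      rw [dist_comm (e (-M))] at t2
      rw [abs_le]; constructor <;> linarith
    have b2 := abs_le.1 b1
    have f := four_pt ht y (e t0) (e M) (e (-M))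
    have i1 : dist (e t0) (e M) = M - t0 := iso1 _ _ b2.2
    have i2 : dist (e t0) (e (-M)) = t0 + M := by
      rw [dist_comm, iso1 _ _ b2.1]; ring
    have i3 : dist (e M) (e (-M)) = 2 * M := by
      rw [dist_comm, iso1 _ _ (by linarith)]; ring
    rw [i1, i2, i3] at f
    have hD : dist y (e t0) ≤ dist y (e M) - (M - t0) := by
      rcases le_max_iff.1 f with h | h <;> linarith
    have hD' : dist y (e t0) ≤ dist y (e (-M)) - (M + t0) := by linarith
    have rgt : ∀ t, t0 ≤ t → t ≤ M → dist y (e t) = dist y (e t0) + (t - t0) := by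
      intro t h1 h2
      have u1 := dist_triangle y (e t0) (e t)
      have u2 := dist_triangle y (e t) (e M)
      rw [iso1 _ _ h1] at u1
      rw [iso1 _ _ h2] at u2
      linarith
    have lft : ∀ t, t ≤ t0 → -M ≤ t → dist y (e t) = dist y (e t0) + (t0 - t) := by
      intro t h1 h2
      have u1 := dist_triangle y (e t0) (e t)
      have u2 := dist_triangle y (e t) (e (-M))
      rw [dist_comm (e t0), iso1 _ _ h1] at u1
      rw [dist_comm (e t), iso1 _ _ h2] at u2
      linarith
    have ht0' : |t0| ≤ dist y (e 0) := by
      have hD0 := dist_nonneg (x := y) (y := e t0)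
      rcases le_total t0 0 with h | h
      · have := rgt 0 h (by linarith)
        rw [abs_of_nonpos h]; linarith
      · have := lft 0 h (by linarith)
        rw [abs_of_nonneg h]; linarith
    have b3 := abs_le.1 ht0'
    refine ⟨t0, ?_⟩
    have w1 := rgt N (by linarith) (by linarith)
    have w2 := rgt (N - ℓ) (by linarith) (by linarith)
    have w3 := lft (-N) (by linarith) (by linarith)
    have w4 := lft (-N - ℓ) (by linarith) (by linarith)
    have g1 : dist (g y) (e N) = dist y (e (N - ℓ)) := by
      have := hge (N - ℓ)
      rw [sub_add_cancel] at this
      rw [this, D]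
    have g2 : dist (g y) (e (-N)) = dist y (e (-N - ℓ)) := by
      have := hge (-N - ℓ)
      rw [sub_add_cancel] at this
      rw [this, D]
    have f2 := four_pt ht y (e N) (g y) (e (-N))
    have i4 : dist (e N) (e (-N)) = 2 * N := by
      rw [dist_comm, iso1 _ _ (by linarith)]; ring
    rw [g2, dist_comm (e N) (g y), g1, i4, w1, w2, w3, w4] at f2
    rcases le_max_iff.1 f2 with h | h <;> linarith
  have hlow : ∀ y, ℓ ≤ dist y (g y) := by
    intro y
    obtain ⟨t0, h⟩ := main y
    have := dist_nonneg (x := y) (y := e t0)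
    linarith
  have hcore : ∀ t, dist (e t) (g (e t)) = ℓ := by
    intro t
    rw [← hge, iso1 _ _ (by linarith)]; ring
  have htl : translationLength g = ℓ := by
    unfold translationLength
    apply le_antisymm
    · refine (ciInf_le ⟨0, ?_⟩ (e 0)).trans (hcore 0).le
      rintro _ ⟨y, rfl⟩
      exact dist_nonneg
    · have : Nonempty X := ⟨x⟩
      exact le_ciInf hlow
  refine ⟨by rw [htl]; exact hℓ0, e, iso, ?_⟩
  ext y
  simp only [isomCore, htl, Set.mem_range, Set.mem_ofPred_eq]
  constructor
  · rintro ⟨t, rfl⟩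
    exact hcore t
  · intro hy
    obtain ⟨t0, h⟩ := main y
    refine ⟨t0, ?_⟩
    symm
    apply dist_le_zero.1
    linarith

end TreeHelpers

lemma leftMulKG_mul {G : Type*} [Group G] (g h : G) (p : KG G) :
    leftMulKG (g * h) p = leftMulKG g (leftMulKG h p) := by
  apply Subtype.ext
  funext y
  simp [leftMulKG, mul_assoc]

lemma leftMulKG_one {G : Type*} [Group G] (p : KG G) : leftMulKG (1 : G) p = p := by
  apply Subtype.ext
  funext y
  simp [leftMulKG]

/-- In the rescaled limit of a blowing-up sequence of representations,
the left multiplication action of `G` on `K(G)` induces an isometric action of `G` on the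
limit `ℝ`-tree with no global fixed point, and some element acts hyperbolically. -/
theorem limit_action_no_global_fixed_point {G : Type u} [Group G]
    (S : Finset G) (hS : S.Nonempty) (hgen : Subgroup.closure (S : Set G) = ⊤)
    {H : Type v} [MetricSpace H] [Nonempty H] {Δ : ℝ} (hΔ : 0 < Δ)
    (hgeo : GeodesicSpace H) (hthin : ThinTriangles H Δ)
    (ρ : ℕ → G →* (H ≃ᵢ H))
    (hblow : ∃ α : G,
      Filter.Tendsto (fun n => translationLength (ρ n α)) Filter.atTop Filter.atTop)
    (x : ℕ → H)
    (hcenter : ∀ n, ∀ y : H, rS S hS (ρ n) (x n) ≤ rS S hS (ρ n) y + 1)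
    (ι : ℕ → KG G → H)
    (hvert : ∀ n, ∀ g : G, ι n (vtx g) = ρ n g (x n))
    (hstraight : ∀ n, StraightOnKG (ι n))
    (hequiv : ∀ n, ∀ g : G, ∀ p : KG G, ι n (leftMulKG g p) = ρ n g (ι n p))
    (dbar : KG G → KG G → ℝ)
    (hconv : ∀ p q : KG G,
      Filter.Tendsto (fun n => rescaleFactor S hS (ι n) * dist (ι n p) (ι n q))
        Filter.atTop (nhds (dbar p q)))
    (T : Type w) [MetricSpace T] (qm : KG G → T)
    (hsurj : Function.Surjective qm) (hdist : ∀ p q', dist (qm p) (qm q') = dbar p q')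
    (htree : IsRTree T) :
    ∃ σ : G →* (T ≃ᵢ T),
      (∀ g : G, ∀ p : KG G, σ g (qm p) = qm (leftMulKG g p)) ∧
      (¬ ∃ z : T, ∀ g : G, σ g z = z) ∧
      (∃ g : G, IsHyperbolicIsom (σ g)) := by
  classical
  have hinv : ∀ (g : G) (p q : KG G), dbar (leftMulKG g p) (leftMulKG g q) = dbar p q := by
    intro g p q
    refine tendsto_nhds_unique (hconv _ _) ?_
    simp only [hequiv, IsometryEquiv.dist_eq]
    exact hconv p q
  let f : G → T → T := fun g z => qm (leftMulKG g (Function.surjInv hsurj z))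
  have hf : ∀ g p, f g (qm p) = qm (leftMulKG g p) := by
    intro g p
    apply dist_le_zero.1
    simp only [f]
    rw [hdist, hinv, ← hdist, Function.surjInv_eq hsurj, dist_self]
  have hf1 : ∀ z, f 1 z = z := by
    intro z
    obtain ⟨p, rfl⟩ := hsurj z
    rw [hf, leftMulKG_one]
  have hfm : ∀ g h z, f (g * h) z = f g (f h z) := by
    intro g h z
    obtain ⟨p, rfl⟩ := hsurj z
    rw [hf, hf h p, hf, leftMulKG_mul]
  have hfi : ∀ g, Isometry (f g) := by
    intro g
    apply Isometry.of_dist_eq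
    intro z w
    obtain ⟨p, rfl⟩ := hsurj z
    obtain ⟨q, rfl⟩ := hsurj w
    rw [hf, hf, hdist, hdist, hinv]
  let σ : G →* (T ≃ᵢ T) :=
    { toFun := fun g => IsometryEquiv.mk' (f g) (f g⁻¹)
        (fun z => by rw [← hfm, mul_inv_cancel, hf1]) (hfi g)
      map_one' := by
        ext z
        exact hf1 z
      map_mul' := by
        intro g h
        ext z
        exact hfm g h z }
  have hσ : ∀ g z, σ g z = f g z := fun g z => rfl
  have : Nonempty T := ⟨qm (vtx 1)⟩
  have hnofix : ¬ ∃ z : T, ∀ s ∈ S, σ s z = z := by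
    rintro ⟨z, hz⟩
    obtain ⟨p, rfl⟩ := hsurj z
    have hx : ∀ n, S.sup' hS (fun s => dist (ι n (vtx (1 : G))) (ι n (vtx s)))
        = rS S hS (ρ n) (x n) := by
      intro n
      unfold rS
      simp only [hvert, map_one]
      rfl
    have hev : ∀ᶠ n in Filter.atTop, ∀ s ∈ S,
        rescaleFactor S hS (ι n) * dist (ι n p) (ρ n s (ι n p)) < 1 / 3 := by
      rw [Filter.eventually_all_finset]
      intro s hs
      have h0 : dbar p (leftMulKG s p) = 0 := by
        rw [← hdist, ← hf, ← hσ, hz s hs, dist_self]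
      have := hconv p (leftMulKG s p)
      rw [h0] at this
      simp only [hequiv] at this
      exact this.eventually_lt_const (by norm_num)
    have hbd : ∀ᶠ n in Filter.atTop, rS S hS (ρ n) (x n) ≤ 3 / 2 := by
      filter_upwards [hev] with n hn
      by_contra hcon
      push Not at hcon
      have hc := hcenter n (ι n p)
      have hlam : rescaleFactor S hS (ι n) = (rS S hS (ρ n) (x n))⁻¹ := by
        unfold rescaleFactor
        rw [hx, max_eq_right (by linarith)]
      have hb : rS S hS (ρ n) (ι n p) ≤ rS S hS (ρ n) (x n) / 3 := by
        conv_lhs => unfold rS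
        apply Finset.sup'_le
        intro s hs
        have := hn s hs
        rw [hlam, inv_mul_lt_iff₀ (by linarith)] at this
        linarith
      linarith
    have hC : ∀ g : G, ∃ C : ℝ, 0 ≤ C ∧
        ∀ n, dist (x n) (ρ n g (x n)) ≤ C * rS S hS (ρ n) (x n) := by
      intro g
      have hg : g ∈ Subgroup.closure (S : Set G) := by rw [hgen]; trivial
      induction hg using Subgroup.closure_induction with
      | mem s hs =>
        refine ⟨1, zero_le_one, fun n => ?_⟩
        rw [one_mul]
        exact Finset.le_sup' (fun α => dist (x n) (ρ n α (x n))) hs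
      | one => exact ⟨0, le_refl _, fun n => by simp⟩
      | mul a b _ _ iha ihb =>
        obtain ⟨A, hA, hA'⟩ := iha
        obtain ⟨B, hB, hB'⟩ := ihb
        refine ⟨A + B, by positivity, fun n => ?_⟩
        have t := dist_triangle (x n) (ρ n a (x n)) (ρ n (a * b) (x n))
        have : dist (ρ n a (x n)) (ρ n (a * b) (x n)) = dist (x n) (ρ n b (x n)) := by
          rw [map_mul]
          exact (ρ n a).dist_eq _ _
        linarith [hA' n, hB' n]
      | inv a _ iha =>
        obtain ⟨A, hA, hA'⟩ := iha
        refine ⟨A, hA, fun n => ?_⟩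
        have : dist (x n) (ρ n a⁻¹ (x n)) = dist (x n) (ρ n a (x n)) := by
          rw [← (ρ n a).dist_eq (x n) (ρ n a⁻¹ (x n)), ← IsometryEquiv.mul_apply, ← map_mul,
            mul_inv_cancel, map_one, dist_comm]
          rfl
        rw [this]; exact hA' n
    obtain ⟨α, hα⟩ := hblow
    obtain ⟨C, hC0, hC'⟩ := hC α
    obtain ⟨n, hn1, hn2⟩ := (hbd.and (hα.eventually_gt_atTop (C * (3 / 2)))).exists
    have h1 : translationLength (ρ n α) ≤ dist (x n) (ρ n α (x n)) := by
      apply ciInf_le ⟨0, ?_⟩ (x n)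
      rintro _ ⟨y, rfl⟩
      exact dist_nonneg
    have h2 := hC' n
    have h3 := mul_le_mul_of_nonneg_left hn1 hC0
    linarith
  refine ⟨σ, fun g p => hf g p, ?_, ?_⟩
  · rintro ⟨z, hz⟩
    exact hnofix ⟨z, fun s _ => hz s⟩
  · by_contra hcon
    push Not at hcon
    have hell : ∀ g, ∃ z, σ g z = z := by
      intro g
      by_contra h
      exact hcon g (hyperbolic_of_no_fixed htree (σ g) h)
    apply hnofix
    obtain ⟨z, hz⟩ := helly htree S (fun s => {z | σ s z = z})
      (fun s _ => fix_convex htree (σ s)) (by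
        intro s _ t _
        obtain ⟨z, h1, h2⟩ := common_fixed htree (σ s) (σ t) (hell s) (hell t) (by
          obtain ⟨z, hz⟩ := hell (s * t)
          exact ⟨z, by rw [map_mul] at hz; exact hz⟩)
        exact ⟨z, h1, h2⟩)
    exact ⟨z, hz⟩
end
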